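/- Anane–Díaz–Saá-type inequality: Let p ∈ (1,∞) and let K ⊆ X be finite. Let u₁, u₂ ∈ F(K) with u₁ > 0 and u₂ > 0 on K. Then ⟨ Lu₁/u₁^{p−1} − Lu₂/u₂^{p−1} , u₁^p − u₂^p ⟩_K ≥ Σ_{x∈K, y∈∂K} b(x,y)·( u₁^p(x) − u₂^p(x) )·( ⟨1 − u₁(y)/u₁(x)⟩_p − ⟨1 − u₂(y)/u₂(x)⟩_p ). If K is connected and equality holds, then u₁ = C·u₂ on K for some constant C > 0. In particular, if φ, ψ are functions vanishing outside K with φ > 0 and ψ > 0 on K, then ⟨Lφ, (φ^p − ψ^p)/φ^{p−1}⟩_K + ⟨Lψ, (ψ^p − φ^p)/ψ^{p−1}⟩_K ≥ 0, and when K is connected, equality holds if and only if φ = C·ψ on X for some C > 0. -/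

import Mathlib

open scoped BigOperators

/-- `⟨a⟩_p := |a|^{p-1} · sgn(a)`. -/
noncomputable def pPow (p a : ℝ) : ℝ := |a| ^ (p - 1) * Real.sign a

/-- `C(V)`: real-valued functions on `X` vanishing outside `V`. -/
def MemC {X : Type*} (V : Set X) (f : X → ℝ) : Prop := ∀ x ∉ V, f x = 0

/-- `C_c(V)`: finitely supported functions with support contained in `V`. -/
def MemCc {X : Type*} (V : Set X) (f : X → ℝ) : Prop :=
  (Function.support f).Finite ∧ ∀ x ∉ V, f x = 0

/-- The formal space `F(V)`. -/
def MemF {X : Type*} (b : X → X → ℝ) (p : ℝ) (V : Set X) (f : X → ℝ) : Prop :=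
  ∀ x ∈ V, Summable fun y => b x y * |f y| ^ (p - 1)

/-- The domain `D` of the energy functional. -/
def MemD {X : Type*} (b : X → X → ℝ) (c : X → ℝ) (p : ℝ) (f : X → ℝ) : Prop :=
  (Summable fun z : X × X => b z.1 z.2 * |f z.1 - f z.2| ^ p) ∧
  (Summable fun x => |c x| * |f x| ^ p)

/-- The `p`-energy functional `h`. -/
noncomputable def energy {X : Type*} (b : X → X → ℝ) (c : X → ℝ) (p : ℝ) (f : X → ℝ) : ℝ :=
  (1 / 2) * ∑' z : X × X, b z.1 z.2 * |f z.1 - f z.2| ^ p + ∑' x, c x * |f x| ^ p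

/-- The `p`-Schrödinger operator `H`. -/
noncomputable def HOp {X : Type*} (m : X → ℝ) (b : X → X → ℝ) (c : X → ℝ) (p : ℝ)
    (f : X → ℝ) (x : X) : ℝ :=
  (1 / m x) * ∑' y, b x y * pPow p (f x - f y) + (c x / m x) * pPow p (f x)

/-- The `p`-Laplacian `L` (i.e. `H` with potential `0`). -/
noncomputable def LOp {X : Type*} (m : X → ℝ) (b : X → X → ℝ) (p : ℝ)
    (f : X → ℝ) (x : X) : ℝ :=
  (1 / m x) * ∑' y, b x y * pPow p (f x - f y)

/-- `(X, m, b)` is a weighted graph. -/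
def IsGraph {X : Type*} (m : X → ℝ) (b : X → X → ℝ) : Prop :=
  (∀ x, 0 < m x) ∧ (∀ x y, 0 ≤ b x y) ∧ (∀ x y, b x y = b y x) ∧
  (∀ x, b x x = 0) ∧ (∀ x, Summable fun y => b x y)

/-- A set `V` is connected w.r.t. the graph: any two of its vertices are joined by a
path of neighbours inside `V`. -/
def ConnectedIn {X : Type*} (b : X → X → ℝ) (V : Set X) : Prop :=
  ∀ x ∈ V, ∀ y ∈ V, Relation.ReflTransGen (fun u v => u ∈ V ∧ v ∈ V ∧ 0 < b u v) x y

/-- The (outer) boundary `∂V`. -/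
def bdry {X : Type*} (b : X → X → ℝ) (V : Set X) : Set X :=
  {y | y ∉ V ∧ ∃ z ∈ V, 0 < b y z}

/-- `u` is harmonic on `V` (w.r.t. `H`). -/
def HarmonicOn {X : Type*} (m : X → ℝ) (b : X → X → ℝ) (c : X → ℝ) (p : ℝ)
    (V : Set X) (u : X → ℝ) : Prop := ∀ x ∈ V, HOp m b c p u x = 0

/-- `u` is superharmonic on `V` (w.r.t. `H`). -/
def SuperharmonicOn {X : Type*} (m : X → ℝ) (b : X → X → ℝ) (c : X → ℝ) (p : ℝ)
    (V : Set X) (u : X → ℝ) : Prop := ∀ x ∈ V, 0 ≤ HOp m b c p u x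

/-- `h` is non-negative on `C_c(V)`. -/
def EnergyNonneg {X : Type*} (b : X → X → ℝ) (c : X → ℝ) (p : ℝ) (V : Set X) : Prop :=
  ∀ φ : X → ℝ, MemCc V φ → 0 ≤ energy b c p φ

/-- `h` is subcritical in `V`: a Hardy inequality holds. -/
def Subcritical {X : Type*} (b : X → X → ℝ) (c : X → ℝ) (p : ℝ) (V : Set X) : Prop :=
  ∃ w : X → ℝ, (∀ x, 0 ≤ w x) ∧ w ≠ 0 ∧
    ∀ φ : X → ℝ, MemCc V φ → (∑' x, |φ x| ^ p * w x) ≤ energy b c p φ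

/-- `h` is critical in `V`. -/
def Critical {X : Type*} (b : X → X → ℝ) (c : X → ℝ) (p : ℝ) (V : Set X) : Prop :=
  EnergyNonneg b c p V ∧ ¬ Subcritical b c p V

/-- The bottom of the spectrum / variational constant `λ₀(V)`. -/
noncomputable def lam0 {X : Type*} (m : X → ℝ) (b : X → X → ℝ) (c : X → ℝ) (p : ℝ)
    (V : Set X) : ℝ :=
  sInf {r : ℝ | ∃ φ : X → ℝ, MemCc V φ ∧ φ ≠ 0 ∧
    r = energy b c p φ / ∑' x, |φ x| ^ p * m x}

/-- The variational `p`-capacity `cap_h(x, V)`. -/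
noncomputable def capH {X : Type*} (b : X → X → ℝ) (c : X → ℝ) (p : ℝ)
    (V : Set X) (x : X) : ℝ :=
  sInf {r : ℝ | ∃ φ : X → ℝ, MemCc V φ ∧ φ x = 1 ∧ r = energy b c p φ}

/-- The weighted bracket `⟨f, g⟩_V = Σ_{x ∈ V} f(x) g(x) m(x)`. -/
noncomputable def bracket {X : Type*} (m : X → ℝ) (V : Set X) (f g : X → ℝ) : ℝ :=
  ∑' x, Set.indicator V (fun x => f x * g x * m x) x

/-- `u ∈ M(V ∖ K)`: positive harmonic function of minimal growth in a neighbourhood of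
infinity in `V` (harmonic on `V∖K`, positive on `V ∪ ∂V`). -/
def MemM {X : Type*} (m : X → ℝ) (b : X → X → ℝ) (c : X → ℝ) (p : ℝ)
    (V K : Set X) (u : X → ℝ) : Prop :=
  HarmonicOn m b c p (V \ K) u ∧
  (∀ x ∈ V ∪ bdry b V, 0 ≤ u x) ∧ (∃ x ∈ V ∪ bdry b V, u x ≠ 0) ∧
  ∀ K' : Set X, K ⊆ K' → K' ⊆ V → K'.Finite → ConnectedIn b K' →
    ∀ v : X → ℝ, MemF b p (V \ K') v →
      (∀ x ∈ V \ K', 0 ≤ v x) → (∃ x ∈ V \ K', v x ≠ 0) →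
      SuperharmonicOn m b c p (V \ K') v →
      (∀ x ∈ K', u x ≤ v x) → ∀ x ∈ V \ K', u x ≤ v x

/-- `u` is a normalised Green's function in `V` at `o`. -/
def IsNormalisedGreen {X : Type*} (m : X → ℝ) (b : X → X → ℝ) (c : X → ℝ) (p : ℝ)
    (V : Set X) (o : X) (u : X → ℝ) : Prop :=
  MemM m b c p V {o} u ∧ MemF b p V u ∧ HOp m b c p u o ≠ 0 ∧
  ∀ x ∈ V, HOp m b c p u x = Set.indicator {o} (fun _ => (1:ℝ)) x


/-- The left-hand side of the Anane–Díaz–Saá inequality. -/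
noncomputable def adsLHS {X : Type*} (m : X → ℝ) (b : X → X → ℝ) (p : ℝ)
    (K : Set X) (u₁ u₂ : X → ℝ) : ℝ :=
  bracket m K
    (fun x => LOp m b p u₁ x / u₁ x ^ (p - 1) - LOp m b p u₂ x / u₂ x ^ (p - 1))
    (fun x => u₁ x ^ p - u₂ x ^ p)

/-- The boundary term on the right-hand side of the Anane–Díaz–Saá inequality. -/
noncomputable def adsRHS {X : Type*} (b : X → X → ℝ) (p : ℝ)
    (K : Set X) (u₁ u₂ : X → ℝ) : ℝ :=
  ∑' z : X × X, Set.indicator (K ×ˢ bdry b K)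
    (fun z => b z.1 z.2 * (u₁ z.1 ^ p - u₂ z.1 ^ p) *
      (pPow p (1 - u₁ z.2 / u₁ z.1) - pPow p (1 - u₂ z.2 / u₂ z.1))) z

/-- The symmetrised Anane–Díaz–Saá expression for compactly supported functions. -/
noncomputable def adsPair {X : Type*} (m : X → ℝ) (b : X → X → ℝ) (p : ℝ)
    (K : Set X) (φ ψ : X → ℝ) : ℝ :=
  bracket m K (LOp m b p φ) (fun x => (φ x ^ p - ψ x ^ p) / φ x ^ (p - 1)) +
  bracket m K (LOp m b p ψ) (fun x => (ψ x ^ p - φ x ^ p) / ψ x ^ (p - 1))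

lemma ads_pPow_mul (p c a : ℝ) (hc : 0 < c) : pPow p (c * a) = c ^ (p - 1) * pPow p a := by
  unfold pPow
  rw [abs_mul, abs_of_pos hc, Real.mul_rpow hc.le (abs_nonneg a)]
  have : Real.sign (c * a) = Real.sign a := by
    rcases lt_trichotomy a 0 with h | h | h
    · rw [Real.sign_of_neg h, Real.sign_of_neg (mul_neg_of_pos_of_neg hc h)]
    · subst h; simp
    · rw [Real.sign_of_pos h, Real.sign_of_pos (mul_pos hc h)]
  rw [this]; ring

lemma ads_pPow_neg (p a : ℝ) : pPow p (-a) = - pPow p a := by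
  unfold pPow
  rw [abs_neg, Real.sign_neg]; ring

lemma ads_mul_pPow (p a : ℝ) (hp : 1 < p) : a * pPow p a = |a| ^ p := by
  unfold pPow
  rcases eq_or_ne a 0 with h | h
  · subst h; simp [Real.zero_rpow (by linarith : p ≠ 0)]
  · have h1 : |a| ^ p = |a| ^ (p - 1) * |a| := by
      rw [← Real.rpow_add_one (abs_ne_zero.mpr h)]; ring_nf
    rw [h1]
    rcases lt_or_gt_of_ne h with h | h
    · rw [Real.sign_of_neg h, abs_of_neg h]; ring
    · rw [Real.sign_of_pos h, abs_of_pos h]; ring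

lemma ads_pPow_pos (p a : ℝ) (h : 0 < a) : pPow p a = a ^ (p - 1) := by
  unfold pPow
  rw [Real.sign_of_pos h, abs_of_pos h, mul_one]

/-- Weighted Jensen: `x^p/w^(p-1) + y^p/v^(p-1) ≥ (x+y)^p/(w+v)^(p-1)` -/
lemma ads_jensen (p : ℝ) (hp : 1 < p) (x y w v : ℝ) (hx : 0 ≤ x) (hy : 0 ≤ y)
    (hw : 0 < w) (hv : 0 < v) (hwv : w + v = 1) :
    (x + y) ^ p ≤ x ^ p / w ^ (p - 1) + y ^ p / v ^ (p - 1) ∧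
    ((x + y) ^ p = x ^ p / w ^ (p - 1) + y ^ p / v ^ (p - 1) → x / w = y / v) := by
  have key : ∀ x w : ℝ, 0 ≤ x → 0 < w → x ^ p / w ^ (p - 1) = w * (x / w) ^ p := by
    intro x w hx hw
    rw [Real.div_rpow hx hw.le, Real.rpow_sub_one hw.ne']
    have := Real.rpow_pos_of_pos hw p
    field_simp
  rw [key x w hx hw, key y v hy hv]
  have e : x + y = w * (x / w) + v * (y / v) := by field_simp
  have sc := strictConvexOn_rpow hp
  have hxw : x / w ∈ Set.Ici (0:ℝ) := div_nonneg hx hw.le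
  have hyv : y / v ∈ Set.Ici (0:ℝ) := div_nonneg hy hv.le
  constructor
  · have := sc.convexOn.2 hxw hyv hw.le hv.le hwv
    simp only [smul_eq_mul] at this
    rw [← e] at this; exact this
  · intro h
    by_contra hne
    have := sc.2 hxw hyv hne hw hv hwv
    simp only [smul_eq_mul] at this
    rw [← e] at this; linarith

lemma ads_picone (p : ℝ) (hp : 1 < p) (s t : ℝ) (hs : 0 < s) (ht : 0 < t) :
    pPow p (1 - t) * (1 - s ^ p / t ^ (p - 1)) ≤ |1 - s| ^ p ∧
    (pPow p (1 - t) * (1 - s ^ p / t ^ (p - 1)) = |1 - s| ^ p → s = t) := by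
  have hp0 : 0 < p := by linarith
  have ht1 := Real.rpow_pos_of_pos ht (p - 1)
  rcases lt_trichotomy t 1 with h | h | h
  · have h1t : 0 < 1 - t := by linarith
    rw [ads_pPow_pos p _ h1t]
    have hq := Real.rpow_pos_of_pos h1t (p - 1)
    obtain ⟨J1, J2⟩ := ads_jensen p hp |1 - s| s (1 - t) t (abs_nonneg _) hs.le h1t ht (by ring)
    have hge : 1 ≤ |1 - s| + s := by linarith [le_abs_self (1 - s)]
    have hone : 1 ≤ (|1 - s| + s) ^ p := Real.one_le_rpow hge hp0.le
    have e : |1 - s| ^ p - (1 - t) ^ (p - 1) * (1 - s ^ p / t ^ (p - 1)) =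
       (1 - t) ^ (p - 1) * (|1 - s| ^ p / (1 - t) ^ (p - 1) + s ^ p / t ^ (p - 1) - 1) := by
      field_simp
      ring
    constructor
    · have : 0 ≤ (1 - t) ^ (p - 1) * (|1 - s| ^ p / (1 - t) ^ (p - 1) + s ^ p / t ^ (p - 1) - 1) :=
        mul_nonneg hq.le (by linarith)
      linarith
    · intro heq
      have h0 : (1 - t) ^ (p - 1) * (|1 - s| ^ p / (1 - t) ^ (p - 1) + s ^ p / t ^ (p - 1) - 1) = 0 := by
        rw [← e, heq]; ring
      have h0' := (mul_eq_zero.mp h0).resolve_left hq.ne'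
      have hr := J2 (by linarith)
      have h3 : (|1 - s| + s) ^ p = 1 := by linarith
      have h4 : |1 - s| + s = 1 := by
        by_contra hne
        have : 1 < |1 - s| + s := lt_of_le_of_ne hge (Ne.symm hne)
        linarith [Real.one_lt_rpow this hp0]
      rw [div_eq_div_iff h1t.ne' ht.ne'] at hr
      have : |1 - s| = 1 - s := by linarith
      rw [this] at hr
      linarith
  · subst h
    have : pPow p (1 - 1) = 0 := by simp [pPow]
    rw [this, zero_mul]
    refine ⟨by positivity, fun h => ?_⟩
    have := (Real.rpow_eq_zero (abs_nonneg _) hp0.ne').mp h.symm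
    have := abs_eq_zero.mp this
    linarith
  · have h1t : 0 < t - 1 := by linarith
    have : pPow p (1 - t) = - (t - 1) ^ (p - 1) := by
      rw [← ads_pPow_pos p _ h1t, ← ads_pPow_neg]; ring_nf
    rw [this]
    have hq := Real.rpow_pos_of_pos h1t (p - 1)
    obtain ⟨J1, J2⟩ := ads_jensen p hp (|1 - s| / t) (1 / t) ((t - 1) / t) (1 / t)
      (by positivity) (by positivity) (by positivity) (by positivity) (by field_simp; ring)
    have hge : s ≤ |1 - s| + 1 := by linarith [neg_abs_le (1 - s)]
    have hone : s ^ p ≤ (|1 - s| + 1) ^ p := Real.rpow_le_rpow hs.le hge hp0.le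
    have htp := Real.rpow_pos_of_pos ht p
    have htt : t ^ p = t ^ (p - 1) * t := by
      rw [← Real.rpow_add_one ht.ne']; ring_nf
    have e1 : (|1 - s| / t + 1 / t) ^ p = (|1 - s| + 1) ^ p / t ^ p := by
      rw [← add_div, Real.div_rpow (by positivity) ht.le]
    have e2 : (|1 - s| / t) ^ p / ((t - 1) / t) ^ (p - 1) + (1 / t) ^ p / (1 / t) ^ (p - 1)
       = (|1 - s| ^ p / (t - 1) ^ (p - 1) + 1) / t := by
      rw [Real.div_rpow (abs_nonneg _) ht.le, Real.div_rpow h1t.le ht.le,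
        Real.div_rpow zero_le_one ht.le, Real.div_rpow zero_le_one ht.le, htt]
      simp only [Real.one_rpow]
      field_simp
    rw [e1, e2, htt] at J1 J2
    have e : |1 - s| ^ p - (-(t - 1) ^ (p - 1)) * (1 - s ^ p / t ^ (p - 1)) =
       (t - 1) ^ (p - 1) * t * ((|1 - s| ^ p / (t - 1) ^ (p - 1) + 1) / t
         - s ^ p / (t ^ (p - 1) * t)) := by
      field_simp
      ring
    have hone' : s ^ p / (t ^ (p - 1) * t) ≤ (|1 - s| + 1) ^ p / (t ^ (p - 1) * t) := by
      gcongr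
    have hqt : 0 < (t - 1) ^ (p - 1) * t := by positivity
    constructor
    · have := mul_nonneg hqt.le (show 0 ≤ (|1 - s| ^ p / (t - 1) ^ (p - 1) + 1) / t
         - s ^ p / (t ^ (p - 1) * t) by linarith)
      linarith
    · intro heq
      have h0 : (t - 1) ^ (p - 1) * t * ((|1 - s| ^ p / (t - 1) ^ (p - 1) + 1) / t
         - s ^ p / (t ^ (p - 1) * t)) = 0 := by rw [← e, heq]; ring
      have h0' := (mul_eq_zero.mp h0).resolve_left hqt.ne'
      have hr := J2 (by linarith)
      have h3 : (|1 - s| + 1) ^ p / (t ^ (p - 1) * t) = s ^ p / (t ^ (p - 1) * t) := by linarith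
      have h3' : (|1 - s| + 1) ^ p = s ^ p := by
        have hh : t ^ (p - 1) * t ≠ 0 := by positivity
        field_simp at h3
        exact h3
      have h4 : |1 - s| + 1 = s := by
        by_contra hne
        have : s < |1 - s| + 1 := lt_of_le_of_ne hge (Ne.symm hne)
        linarith [Real.rpow_lt_rpow hs.le this hp0]
      have h5 : |1 - s| = s - 1 := by linarith
      rw [h5] at hr
      field_simp at hr
      linarith

lemma ads_half (p : ℝ) (hp : 1 < p) (a c A B : ℝ) (ha : 0 < a) (hc : 0 < c) (hA : 0 < A)
    (hB : 0 < B) :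
    a ^ p * (pPow p (1 - c / a) - pPow p (1 - B / A)) +
      c ^ p * (pPow p (1 - a / c) - pPow p (1 - A / B)) =
    a ^ p * (|1 - c / a| ^ p -
      pPow p (1 - B / A) * (1 - (c / a) ^ p / (B / A) ^ (p - 1))) := by
  have inv : ∀ x y : ℝ, 0 < x → 0 < y →
      pPow p (1 - x / y) = - (pPow p (1 - y / x) / (y / x) ^ (p - 1)) := by
    intro x y hx hy
    have h1 : 1 - x / y = (x / y) * (-(1 - y / x)) := by field_simp; ring
    rw [h1, ads_pPow_mul _ _ _ (by positivity), ads_pPow_neg,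
      ← inv_div y x, Real.inv_rpow (by positivity)]
    field_simp
  rw [inv a c ha hc, inv A B hA hB, ← ads_mul_pPow p _ hp]
  have hca : 0 < c / a := by positivity
  have hBA : 0 < B / A := by positivity
  have h2 : c ^ p = a ^ p * ((c / a) ^ (p - 1) * (c / a)) := by
    rw [← Real.rpow_add_one hca.ne', sub_add_cancel, Real.div_rpow hc.le ha.le]
    have := Real.rpow_pos_of_pos ha p
    field_simp
  have h3 : (c / a) ^ p = (c / a) ^ (p - 1) * (c / a) := by
    rw [← Real.rpow_add_one hca.ne', sub_add_cancel]
  rw [h2, h3]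
  have q1 := Real.rpow_pos_of_pos hca (p - 1)
  have q2 := Real.rpow_pos_of_pos hBA (p - 1)
  generalize (c / a) ^ (p - 1) = Q at *
  generalize (B / A) ^ (p - 1) = R at *
  generalize pPow p (1 - c / a) = U at *
  generalize pPow p (1 - B / A) = V at *
  generalize c / a = s at *
  field_simp
  ring

lemma ads_pair_ineq (p : ℝ) (hp : 1 < p) (a c A B : ℝ) (ha : 0 < a) (hc : 0 < c) (hA : 0 < A)
    (hB : 0 < B) :
    0 ≤ (a ^ p - A ^ p) * (pPow p (1 - c / a) - pPow p (1 - B / A)) +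
      (c ^ p - B ^ p) * (pPow p (1 - a / c) - pPow p (1 - A / B)) ∧
    ((a ^ p - A ^ p) * (pPow p (1 - c / a) - pPow p (1 - B / A)) +
      (c ^ p - B ^ p) * (pPow p (1 - a / c) - pPow p (1 - A / B)) = 0 → c / a = B / A) := by
  have e1 := ads_half p hp a c A B ha hc hA hB
  have e2 := ads_half p hp A B a c hA hB ha hc
  obtain ⟨p1, p2⟩ := ads_picone p hp (c / a) (B / A) (by positivity) (by positivity)
  obtain ⟨q1, q2⟩ := ads_picone p hp (B / A) (c / a) (by positivity) (by positivity)
  have hap := Real.rpow_pos_of_pos ha p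
  have hAp := Real.rpow_pos_of_pos hA p
  have r1 := mul_nonneg hap.le (sub_nonneg.mpr p1)
  have r2 := mul_nonneg hAp.le (sub_nonneg.mpr q1)
  constructor
  · nlinarith
  · intro h
    have : a ^ p * (|1 - c / a| ^ p -
      pPow p (1 - B / A) * (1 - (c / a) ^ p / (B / A) ^ (p - 1))) = 0 := by nlinarith
    have := (mul_eq_zero.mp this).resolve_left hap.ne'
    exact p2 (by linarith)

lemma ads_summable {X : Type*} (b : X → X → ℝ) (p : ℝ) (hp : 1 < p)
    (hb : ∀ x y, 0 ≤ b x y) (hs : ∀ x, Summable fun y => b x y) (u : X → ℝ) (x : X)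
    (hF : Summable fun y => b x y * |u y| ^ (p - 1)) :
    Summable fun y => b x y * pPow p (u x - u y) := by
  have hp1 : 0 ≤ p - 1 := by linarith
  refine Summable.of_norm_bounded
    (g := fun y => 2 ^ (p - 1) * (b x y * |u x| ^ (p - 1) + b x y * |u y| ^ (p - 1)))
    ((((hs x).mul_right _).add hF).mul_left _) ?_
  intro y
  rw [Real.norm_eq_abs, abs_mul, abs_of_nonneg (hb x y)]
  have h1 : |pPow p (u x - u y)| ≤ |u x - u y| ^ (p - 1) := by
    unfold pPow
    rw [abs_mul, abs_of_nonneg (by positivity : 0 ≤ |u x - u y| ^ (p - 1))]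
    have : |Real.sign (u x - u y)| ≤ 1 := by
      rcases Real.sign_apply_eq (u x - u y) with h | h | h <;> rw [h] <;> norm_num
    exact mul_le_of_le_one_right (by positivity) this
  have h2 : |u x - u y| ^ (p - 1) ≤ 2 ^ (p - 1) * (|u x| ^ (p - 1) + |u y| ^ (p - 1)) := by
    have hx : 0 ≤ |u x| ^ (p - 1) := by positivity
    have hy : 0 ≤ |u y| ^ (p - 1) := by positivity
    have hle := abs_sub (u x) (u y)
    have h2p : (0:ℝ) ≤ 2 ^ (p - 1) := by positivity
    rcases le_total |u x| |u y| with h | h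
    · calc |u x - u y| ^ (p - 1) ≤ (2 * |u y|) ^ (p - 1) :=
            Real.rpow_le_rpow (abs_nonneg _) (by linarith) hp1
        _ = 2 ^ (p - 1) * |u y| ^ (p - 1) := Real.mul_rpow (by norm_num) (abs_nonneg _)
        _ ≤ _ := by gcongr; linarith
    · calc |u x - u y| ^ (p - 1) ≤ (2 * |u x|) ^ (p - 1) :=
            Real.rpow_le_rpow (abs_nonneg _) (by linarith) hp1
        _ = 2 ^ (p - 1) * |u x| ^ (p - 1) := Real.mul_rpow (by norm_num) (abs_nonneg _)
        _ ≤ _ := by gcongr; linarith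
  calc b x y * |pPow p (u x - u y)| ≤
        b x y * (2 ^ (p - 1) * (|u x| ^ (p - 1) + |u y| ^ (p - 1))) :=
        mul_le_mul_of_nonneg_left (h1.trans h2) (hb x y)
    _ = _ := by ring

/-- The kernel. -/
noncomputable def adsG {X : Type*} (b : X → X → ℝ) (p : ℝ) (u₁ u₂ : X → ℝ) (x y : X) : ℝ :=
  b x y * (u₁ x ^ p - u₂ x ^ p) * (pPow p (1 - u₁ y / u₁ x) - pPow p (1 - u₂ y / u₂ x))

lemma ads_quot (p : ℝ) (u : ℝ) (hu : 0 < u) (v : ℝ) :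
    pPow p (1 - v / u) = pPow p (u - v) / u ^ (p - 1) := by
  have h : u - v = u * (1 - v / u) := by field_simp
  rw [h, ads_pPow_mul p _ _ hu]
  have := Real.rpow_pos_of_pos hu (p - 1)
  field_simp

lemma ads_hasSum {X : Type*} (m : X → ℝ) (b : X → X → ℝ) (p : ℝ) (hp : 1 < p)
    (hG : IsGraph m b) (u₁ u₂ : X → ℝ) (x : X)
    (h1 : Summable fun y => b x y * |u₁ y| ^ (p - 1))
    (h2 : Summable fun y => b x y * |u₂ y| ^ (p - 1))
    (hu₁ : 0 < u₁ x) (hu₂ : 0 < u₂ x) :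
    HasSum (adsG b p u₁ u₂ x)
      ((LOp m b p u₁ x / u₁ x ^ (p - 1) - LOp m b p u₂ x / u₂ x ^ (p - 1)) *
        (u₁ x ^ p - u₂ x ^ p) * m x) := by
  obtain ⟨hm, hb, -, -, hs⟩ := hG
  have s1 := (ads_summable b p hp hb hs u₁ x h1).hasSum
  have s2 := (ads_summable b p hp hb hs u₂ x h2).hasSum
  have := ((s1.div_const (u₁ x ^ (p - 1))).sub (s2.div_const (u₂ x ^ (p - 1)))).mul_right
    (u₁ x ^ p - u₂ x ^ p)
  convert this using 1
  · rfl
  · funext y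
    unfold adsG
    rw [ads_quot p _ hu₁, ads_quot p _ hu₂]
    ring
  · unfold LOp
    have := hm x
    field_simp

lemma ads_LHS {X : Type*} (m : X → ℝ) (b : X → X → ℝ) (p : ℝ) (hp : 1 < p)
    (hG : IsGraph m b) (K : Finset X) (u₁ u₂ : X → ℝ)
    (h1 : MemF b p K u₁) (h2 : MemF b p K u₂)
    (hu₁ : ∀ x ∈ (K : Set X), 0 < u₁ x) (hu₂ : ∀ x ∈ (K : Set X), 0 < u₂ x) :
    adsLHS m b p K u₁ u₂ = ∑ x ∈ K, ∑' y, adsG b p u₁ u₂ x y := by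
  unfold adsLHS bracket
  rw [tsum_eq_sum (s := K)]
  · refine Finset.sum_congr rfl fun x hx => ?_
    rw [Set.indicator_of_mem (Finset.mem_coe.mpr hx)]
    exact (ads_hasSum m b p hp hG u₁ u₂ x (h1 x hx) (h2 x hx) (hu₁ x hx) (hu₂ x hx)).tsum_eq.symm
  · intro x hx
    exact Set.indicator_of_notMem (by simpa using hx) _

lemma ads_RHS {X : Type*} (m : X → ℝ) (b : X → X → ℝ) (p : ℝ) (hp : 1 < p)
    (hG : IsGraph m b) (K : Finset X) (u₁ u₂ : X → ℝ)
    (h1 : MemF b p K u₁) (h2 : MemF b p K u₂)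
    (hu₁ : ∀ x ∈ (K : Set X), 0 < u₁ x) (hu₂ : ∀ x ∈ (K : Set X), 0 < u₂ x) :
    adsRHS b p K u₁ u₂ =
      ∑ x ∈ K, ∑' y, Set.indicator (bdry b K) (adsG b p u₁ u₂ x) y := by
  classical
  unfold adsRHS
  refine HasSum.tsum_eq ?_
  have key : ∀ x ∈ K, HasSum
      (fun z : X × X => if z.1 = x then Set.indicator (bdry b K) (adsG b p u₁ u₂ x) z.2 else 0)
      (∑' y, Set.indicator (bdry b K) (adsG b p u₁ u₂ x) y) := by
    intro x hx
    have hinj : Function.Injective (Prod.mk x : X → X × X) := Prod.mk_right_injective x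
    rw [← hinj.hasSum_iff]
    · have := ((ads_hasSum m b p hp hG u₁ u₂ x (h1 x hx) (h2 x hx) (hu₁ x hx)
        (hu₂ x hx)).summable.indicator (bdry b K)).hasSum
      simpa [Function.comp_def] using this
    · rintro ⟨z, w⟩ hz
      rw [if_neg]
      rintro rfl
      exact hz ⟨w, rfl⟩
  convert hasSum_sum key using 1
  funext z
  rw [Finset.sum_ite_eq]
  by_cases hz : z.1 ∈ K
  · by_cases hw : z.2 ∈ bdry b K
    · rw [Set.indicator_of_mem (by exact ⟨hz, hw⟩), if_pos hz, Set.indicator_of_mem hw]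
      rfl
    · rw [Set.indicator_of_notMem (by exact fun h => hw h.2), if_pos hz,
        Set.indicator_of_notMem hw]
  · rw [Set.indicator_of_notMem (by exact fun h => hz h.1), if_neg hz]

lemma ads_diff {X : Type*} (m : X → ℝ) (b : X → X → ℝ) (p : ℝ) (hp : 1 < p)
    (hG : IsGraph m b) (K : Finset X) (u₁ u₂ : X → ℝ)
    (h1 : MemF b p K u₁) (h2 : MemF b p K u₂)
    (hu₁ : ∀ x ∈ (K : Set X), 0 < u₁ x) (hu₂ : ∀ x ∈ (K : Set X), 0 < u₂ x) :
    2 * (adsLHS m b p K u₁ u₂ - adsRHS b p K u₁ u₂) =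
      ∑ x ∈ K, ∑ y ∈ K, (adsG b p u₁ u₂ x y + adsG b p u₁ u₂ y x) := by
  rw [ads_LHS m b p hp hG K u₁ u₂ h1 h2 hu₁ hu₂, ads_RHS m b p hp hG K u₁ u₂ h1 h2 hu₁ hu₂]
  have key : ∀ x ∈ K, ∑' y, adsG b p u₁ u₂ x y =
      ∑ y ∈ K, adsG b p u₁ u₂ x y +
        ∑' y, Set.indicator (bdry b K) (adsG b p u₁ u₂ x) y := by
    intro x hx
    have hsum := (ads_hasSum m b p hp hG u₁ u₂ x (h1 x hx) (h2 x hx) (hu₁ x hx)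
        (hu₂ x hx)).summable
    have e : ∑ y ∈ K, adsG b p u₁ u₂ x y =
        ∑' y, Set.indicator (K : Set X) (adsG b p u₁ u₂ x) y := by
      rw [tsum_eq_sum (s := K)]
      · refine Finset.sum_congr rfl fun y hy => ?_
        rw [Set.indicator_of_mem (Finset.mem_coe.mpr hy)]
      · intro y hy
        exact Set.indicator_of_notMem (by simpa using hy) _
    rw [e, ← (hsum.indicator _).tsum_add (hsum.indicator _)]
    refine tsum_congr fun y => ?_
    by_cases hy : y ∈ (K : Set X)
    · rw [Set.indicator_of_mem hy, Set.indicator_of_notMem (fun h => h.1 hy), add_zero]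
    · by_cases hy' : y ∈ bdry b K
      · rw [Set.indicator_of_mem hy', Set.indicator_of_notMem hy, zero_add]
      · rw [Set.indicator_of_notMem hy', Set.indicator_of_notMem hy]
        have : b x y = 0 := by
          by_contra hne
          have hpos : 0 < b x y := lt_of_le_of_ne (hG.2.1 x y) (Ne.symm hne)
          rw [hG.2.2.1] at hpos
          exact hy' ⟨hy, x, hx, hpos⟩
        simp [adsG, this]
  rw [Finset.sum_congr rfl key, Finset.sum_add_distrib, add_sub_cancel_right]
  simp only [Finset.sum_add_distrib]
  rw [Finset.sum_comm (s := K) (t := K) (f := fun x y => adsG b p u₁ u₂ y x)]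
  ring

lemma ads_main {X : Type*} (m : X → ℝ) (b : X → X → ℝ) (p : ℝ) (hp : 1 < p)
    (hG : IsGraph m b) (K : Finset X) (u₁ u₂ : X → ℝ)
    (h1 : MemF b p K u₁) (h2 : MemF b p K u₂)
    (hu₁ : ∀ x ∈ (K : Set X), 0 < u₁ x) (hu₂ : ∀ x ∈ (K : Set X), 0 < u₂ x) :
    adsRHS b p K u₁ u₂ ≤ adsLHS m b p K u₁ u₂ ∧
    (ConnectedIn b K → adsRHS b p K u₁ u₂ = adsLHS m b p K u₁ u₂ →
      ∃ C : ℝ, 0 < C ∧ ∀ x ∈ (K : Set X), u₁ x = C * u₂ x) := by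
  have hd := ads_diff m b p hp hG K u₁ u₂ h1 h2 hu₁ hu₂
  have e : ∀ x y, adsG b p u₁ u₂ x y + adsG b p u₁ u₂ y x =
      b x y * ((u₁ x ^ p - u₂ x ^ p) * (pPow p (1 - u₁ y / u₁ x) - pPow p (1 - u₂ y / u₂ x)) +
      (u₁ y ^ p - u₂ y ^ p) * (pPow p (1 - u₁ x / u₁ y) - pPow p (1 - u₂ x / u₂ y))) := by
    intro x y
    unfold adsG
    rw [hG.2.2.1 y x]; ring
  have hnn : ∀ x ∈ K, ∀ y ∈ K, 0 ≤ adsG b p u₁ u₂ x y + adsG b p u₁ u₂ y x := by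
    intro x hx y hy
    rw [e]
    exact mul_nonneg (hG.2.1 x y) (ads_pair_ineq p hp _ _ _ _ (hu₁ x hx) (hu₁ y hy) (hu₂ x hx)
      (hu₂ y hy)).1
  constructor
  · have := Finset.sum_nonneg fun x hx => Finset.sum_nonneg (hnn x hx)
    linarith
  · intro hc heq
    rw [heq, sub_self, mul_zero] at hd
    have hz : ∀ x ∈ K, ∀ y ∈ K, adsG b p u₁ u₂ x y + adsG b p u₁ u₂ y x = 0 := by
      intro x hx y hy
      have := (Finset.sum_eq_zero_iff_of_nonneg
        (fun x hx => Finset.sum_nonneg (hnn x hx))).mp hd.symm x hx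
      exact (Finset.sum_eq_zero_iff_of_nonneg (hnn x hx)).mp this y hy
    rcases K.eq_empty_or_nonempty with hK | ⟨o, ho⟩
    · subst hK
      exact ⟨1, one_pos, by simp⟩
    · have ho' : o ∈ (K : Set X) := ho
      refine ⟨u₁ o / u₂ o, div_pos (hu₁ o ho') (hu₂ o ho'), fun x hx => ?_⟩
      have := hc o ho' x hx
      clear hx
      induction this with
      | refl =>
        have := hu₂ o ho'
        field_simp
      | tail _ hr ih =>
        rename_i y z _
        obtain ⟨hy, hz', hbyz⟩ := hr
        have h0 := hz y hy z hz'
        rw [e] at h0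
        have h0' := (mul_eq_zero.mp h0).resolve_left hbyz.ne'
        have := (ads_pair_ineq p hp _ _ _ _ (hu₁ y hy) (hu₁ z hz') (hu₂ y hy)
          (hu₂ z hz')).2 h0'
        have y1 := hu₁ y hy
        have y2 := hu₂ y hy
        rw [div_eq_div_iff y1.ne' y2.ne', ih] at this
        have : u₂ y * (u₁ z - u₁ o / u₂ o * u₂ z) = 0 := by linarith
        have := (mul_eq_zero.mp this).resolve_left y2.ne'
        linarith

lemma ads_memF {X : Type*} (b : X → X → ℝ) (p : ℝ) (hp : 1 < p) (K : Finset X)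
    (φ : X → ℝ) (h : MemC (K : Set X) φ) : MemF b p K φ := by
  intro x _
  refine summable_of_ne_finset_zero (s := K) fun y hy => ?_
  rw [h y (by simpa using hy), abs_zero, Real.zero_rpow (by linarith), mul_zero]

lemma ads_pair_eq {X : Type*} (m : X → ℝ) (b : X → X → ℝ) (p : ℝ)
    (K : Finset X) (φ ψ : X → ℝ) 
    (hφ : ∀ x ∈ (K : Set X), 0 < φ x) (hψ : ∀ x ∈ (K : Set X), 0 < ψ x) :
    adsPair m b p K φ ψ = adsLHS m b p K φ ψ := by
  have br : ∀ f g : X → ℝ, bracket m (K : Set X) f g = ∑ x ∈ K, f x * g x * m x := by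
    intro f g
    unfold bracket
    rw [tsum_eq_sum (s := K)]
    · refine Finset.sum_congr rfl fun x hx => ?_
      rw [Set.indicator_of_mem (Finset.mem_coe.mpr hx)]
    · intro x hx
      exact Set.indicator_of_notMem (by simpa using hx) _
  unfold adsPair adsLHS
  rw [br, br, br, ← Finset.sum_add_distrib]
  refine Finset.sum_congr rfl fun x hx => ?_
  ring

theorem stmt6 {X : Type*} [Countable X] [Infinite X]
    (m : X → ℝ) (b : X → X → ℝ) (p : ℝ)
    (hG : IsGraph m b) (hgconn : ConnectedIn b Set.univ) (hp : 1 < p)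
    (K : Set X) (hK : K.Finite) (u₁ u₂ : X → ℝ)
    (hu₁F : MemF b p K u₁) (hu₂F : MemF b p K u₂)
    (hu₁ : ∀ x ∈ K, 0 < u₁ x) (hu₂ : ∀ x ∈ K, 0 < u₂ x) :
    adsRHS b p K u₁ u₂ ≤ adsLHS m b p K u₁ u₂ ∧
    (ConnectedIn b K → adsRHS b p K u₁ u₂ = adsLHS m b p K u₁ u₂ →
      ∃ C : ℝ, 0 < C ∧ ∀ x ∈ K, u₁ x = C * u₂ x) ∧
    (∀ φ ψ : X → ℝ, MemC K φ → MemC K ψ →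
      (∀ x ∈ K, 0 < φ x) → (∀ x ∈ K, 0 < ψ x) →
      0 ≤ adsPair m b p K φ ψ ∧
      (ConnectedIn b K →
        (adsPair m b p K φ ψ = 0 ↔ ∃ C : ℝ, 0 < C ∧ ∀ x, φ x = C * ψ x))) := by
  lift K to Finset X using hK
  obtain ⟨r1, r2⟩ := ads_main m b p hp hG K u₁ u₂ hu₁F hu₂F hu₁ hu₂
  refine ⟨r1, r2, ?_⟩
  intro φ ψ cφ cψ hφ hψ
  have fφ := ads_memF b p hp K φ cφ
  have fψ := ads_memF b p hp K ψ cψ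
  obtain ⟨s1, s2⟩ := ads_main m b p hp hG K φ ψ fφ fψ hφ hψ
  have hR : adsRHS b p K φ ψ = 0 := by
    rw [ads_RHS m b p hp hG K φ ψ fφ fψ hφ hψ]
    refine Finset.sum_eq_zero fun x _ => ?_
    rw [← tsum_zero (α := ℝ) (β := X)]
    refine tsum_congr fun y => ?_
    by_cases hy : y ∈ bdry b K
    · rw [Set.indicator_of_mem hy]
      simp [adsG, cφ y hy.1, cψ y hy.1]
    · exact Set.indicator_of_notMem hy _
  rw [ads_pair_eq m b p K φ ψ hφ hψ]
  rw [hR] at s1 s2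
  refine ⟨s1, fun hc => ⟨fun h => ?_, ?_⟩⟩
  · obtain ⟨C, hC, hx⟩ := s2 hc h.symm
    refine ⟨C, hC, fun x => ?_⟩
    by_cases h : x ∈ (K : Set X)
    · exact hx x h
    · rw [cφ x h, cψ x h, mul_zero]
  · rintro ⟨C, hC, hx⟩
    rw [ads_LHS m b p hp hG K φ ψ fφ fψ hφ hψ]
    refine Finset.sum_eq_zero fun x _ => ?_
    rw [← tsum_zero (α := ℝ) (β := X)]
    refine tsum_congr fun y => ?_
    unfold adsG
    rw [hx x, hx y, mul_div_mul_left _ _ hC.ne', sub_self, mul_zero]
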